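/- Let 0 < α < 1/2 and 0 < β < 1/2 with τ(C_α)·τ(C_β) < 1, and set p = 1/α, q = 1/β, s₁ = 1 − 2α, s₀ = 1/(1 − 2β). For every λ with s₁ ≤ λ ≤ s₀: (1) if q·λ ≤ s₀, then C_α − λ·C_β = [−λ, 1] if and only if C_α − (q·λ)·C_β = [−q·λ, 1]; (2) if s₁ ≤ λ/p, then C_α − λ·C_β = [−λ, 1] if and only if C_α − (λ/p)·C_β = [−λ/p, 1]. -/

import Mathlib

/-!
Write `D(l) = C_α - l C_β`. Splitting `C_β = β C_β ∪ (β C_β + (1 - β))` gives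
`D(m) = D(β m) ∪ (D(β m) - (m - β m))`.
If `D(β m) = [-β m, 1]`, the two pieces are intervals that meet exactly when `m ≤ 1 / (1 - 2β)`, and
then `D(m) = [-m, 1]`. Conversely, let `D(m) = [-m, 1]`. Thickness below one and `1 - 2α ≤ β m`
force `1 + 3 β m < 2 m`, which says that the right half of `[-β m, 1]` lies beyond the second piece,
hence in `D(β m)`; the left half follows by the symmetry `z ↦ 1 - β m - z` of `D(β m)`.

The claim about `l / p` is the claim about `q * l` with the two Cantor sets exchanged, because
`C_α - l C_β = -l (C_β - l⁻¹ C_α)`.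
-/

open Set MeasureTheory

/-- The middle Cantor set `C_a`, for `0 < a < 1/2`:
`C_a = { (1-a) * ∑ εₖ aᵏ : εₖ ∈ {0,1} }`. -/
noncomputable def middleCantor (a : ℝ) : Set ℝ :=
  {x : ℝ | ∃ ε : ℕ → Bool, x = (1 - a) * ∑' k : ℕ, (if ε k then a ^ k else 0)}

/-- The arithmetic difference `C_a - l · C_b`. -/
noncomputable def diffSet (a b l : ℝ) : Set ℝ :=
  {z : ℝ | ∃ x ∈ middleCantor a, ∃ y ∈ middleCantor b, z = x - l * y}

/-- The point of `middleCantor a` with digit sequence `ε`, so that `middleCantor a` is the range of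
`cantorPoint a`. -/
noncomputable def cantorPoint (a : ℝ) (ε : ℕ → Bool) : ℝ :=
  (1 - a) * ∑' k : ℕ, if ε k then a ^ k else 0

section MiddleCantor

variable {a x : ℝ}

theorem middleCantor_eq_range (a : ℝ) : middleCantor a = range (cantorPoint a) := by
  ext x
  exact exists_congr fun _ => eq_comm

theorem summable_ite_pow (ha : |a| < 1) (ε : ℕ → Bool) :
    Summable fun k : ℕ => if ε k then a ^ k else 0 :=
  (summable_geometric_of_abs_lt_one ha).abs.of_norm_bounded fun k => by split_ifs <;> simp

theorem cantorPoint_not (ha : |a| < 1) (ε : ℕ → Bool) :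
    cantorPoint a (fun k => !ε k) = 1 - cantorPoint a ε := by
  have digits_add : ∀ k, ((if !ε k then a ^ k else 0) + if ε k then a ^ k else 0) = a ^ k :=
    fun k => by cases ε k <;> simp
  have one_sub_ne : 1 - a ≠ 0 := (sub_pos.2 (abs_lt.1 ha).2).ne'
  rw [eq_sub_iff_add_eq, cantorPoint, cantorPoint, ← mul_add,
    ← (summable_ite_pow ha _).tsum_add (summable_ite_pow ha ε), tsum_congr digits_add,
    tsum_geometric_of_abs_lt_one ha, mul_inv_cancel₀ one_sub_ne]

theorem cantorPoint_eq_mul_cantorPoint_succ_add (ha : |a| < 1) (ε : ℕ → Bool) :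
    cantorPoint a ε = a * cantorPoint a (fun k => ε (k + 1)) + if ε 0 then 1 - a else 0 := by
  have shift : ∑' k : ℕ, (if ε (k + 1) then a ^ (k + 1) else 0)
      = a * ∑' k : ℕ, if ε (k + 1) then a ^ k else 0 := by
    simp only [← tsum_mul_left, mul_ite, mul_zero, pow_succ']
  rw [cantorPoint, cantorPoint, (summable_ite_pow ha ε).tsum_eq_zero_add, shift, pow_zero]
  split_ifs <;> ring

theorem middleCantor_eq_union_image (ha : |a| < 1) :
    middleCantor a
      = (fun x => a * x) '' middleCantor a ∪ (fun x => a * x + (1 - a)) '' middleCantor a := by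
  simp only [middleCantor_eq_range]
  apply Subset.antisymm
  · rintro _ ⟨ε, rfl⟩
    rw [cantorPoint_eq_mul_cantorPoint_succ_add ha ε]
    cases ε 0
    · exact .inl ⟨_, mem_range_self fun k => ε (k + 1), by simp⟩
    · exact .inr ⟨_, mem_range_self fun k => ε (k + 1), by simp⟩
  · rintro _ (⟨_, ⟨ε, rfl⟩, rfl⟩ | ⟨_, ⟨ε, rfl⟩, rfl⟩)
    · exact ⟨fun k => k.casesOn false ε,
        (cantorPoint_eq_mul_cantorPoint_succ_add ha _).trans (by simp)⟩
    · exact ⟨fun k => k.casesOn true ε,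
        (cantorPoint_eq_mul_cantorPoint_succ_add ha _).trans (by simp)⟩

theorem one_sub_mem_middleCantor (ha : |a| < 1) (hx : x ∈ middleCantor a) :
    1 - x ∈ middleCantor a := by
  rw [middleCantor_eq_range] at hx ⊢
  obtain ⟨ε, rfl⟩ := hx
  exact ⟨_, cantorPoint_not ha ε⟩

theorem middleCantor_subset_Icc (ha₀ : 0 ≤ a) (ha₁ : a < 1) : middleCantor a ⊆ Icc 0 1 := by
  have nonneg : ∀ x ∈ middleCantor a, 0 ≤ x := by
    rintro _ ⟨ε, rfl⟩
    exact mul_nonneg (sub_nonneg.2 ha₁.le) (tsum_nonneg fun k => by positivity)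
  have abs_lt_one : |a| < 1 := by rwa [abs_of_nonneg ha₀]
  exact fun x hx => ⟨nonneg x hx, sub_nonneg.1 (nonneg _ (one_sub_mem_middleCantor abs_lt_one hx))⟩

end MiddleCantor

section DiffSet

variable {a b l m z : ℝ}

theorem diffSet_subset_Icc (ha₀ : 0 ≤ a) (ha₁ : a < 1) (hb₀ : 0 ≤ b) (hb₁ : b < 1) (hl : 0 ≤ l) :
    diffSet a b l ⊆ Icc (-l) 1 := by
  rintro _ ⟨x, hx, y, hy, rfl⟩
  obtain ⟨hx₀, hx₁⟩ := middleCantor_subset_Icc ha₀ ha₁ hx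
  obtain ⟨hy₀, hy₁⟩ := middleCantor_subset_Icc hb₀ hb₁ hy
  have hly₀ : 0 ≤ l * y := mul_nonneg hl hy₀
  have hly₁ : l * y ≤ l := mul_le_of_le_one_right hl hy₁
  constructor <;> linarith

theorem one_sub_sub_mem_diffSet (ha : |a| < 1) (hb : |b| < 1) (hz : z ∈ diffSet a b l) :
    1 - l - z ∈ diffSet a b l := by
  obtain ⟨x, hx, y, hy, rfl⟩ := hz
  exact ⟨_, one_sub_mem_middleCantor ha hx, _, one_sub_mem_middleCantor hb hy, by ring⟩

theorem diffSet_eq_union_image (a : ℝ) (hb : |b| < 1) (m : ℝ) :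
    diffSet a b m
      = diffSet a b (b * m) ∪ (fun z => z - (m - b * m)) '' diffSet a b (b * m) := by
  have split := middleCantor_eq_union_image hb
  apply Subset.antisymm
  · rintro _ ⟨x, hx, y, hy, rfl⟩
    rw [split] at hy
    obtain ⟨w, hw, rfl⟩ | ⟨w, hw, rfl⟩ := hy
    · exact .inl ⟨x, hx, w, hw, by ring⟩
    · exact .inr ⟨_, ⟨x, hx, w, hw, rfl⟩, by ring⟩
  · rintro _ (⟨x, hx, w, hw, rfl⟩ | ⟨_, ⟨x, hx, w, hw, rfl⟩, rfl⟩)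
    · exact ⟨x, hx, b * w, split.ge (.inl ⟨w, hw, rfl⟩), by ring⟩
    · exact ⟨x, hx, b * w + (1 - b), split.ge (.inr ⟨w, hw, rfl⟩), by ring⟩

theorem diffSet_inv_eq_preimage (a b : ℝ) (hl : l ≠ 0) :
    diffSet b a l⁻¹ = (fun z => -l * z) ⁻¹' diffSet a b l := by
  ext z
  constructor
  · rintro ⟨y, hy, x, hx, rfl⟩
    exact ⟨x, hx, y, hy, by field_simp; ring⟩
  · rintro ⟨x, hx, y, hy, hxy⟩
    refine ⟨y, hy, x, hx, ?_⟩
    field_simp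
    linarith

theorem diffSet_inv_eq_Icc_iff (a b : ℝ) (hl : 0 < l) :
    diffSet b a l⁻¹ = Icc (-l⁻¹) 1 ↔ diffSet a b l = Icc (-l) 1 := by
  have neg_ne : -l ≠ 0 := neg_ne_zero.2 hl.ne'
  have hIcc : Icc (-l⁻¹) 1 = (fun z => -l * z) ⁻¹' Icc (-l) 1 := by
    rw [preimage_const_mul_Icc_of_neg _ _ (neg_lt_zero.2 hl), div_self neg_ne, one_div, inv_neg]
  rw [diffSet_inv_eq_preimage a b hl.ne', hIcc]
  exact (mul_left_surjective₀ neg_ne).preimage_injective.eq_iff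

theorem diffSet_eq_Icc_of_right_half_subset (ha₀ : 0 ≤ a) (ha₁ : a < 1) (hb₀ : 0 ≤ b) (hb₁ : b < 1)
    (hl : 0 ≤ l) (h : Icc ((1 - l) / 2) 1 ⊆ diffSet a b l) : diffSet a b l = Icc (-l) 1 := by
  refine (diffSet_subset_Icc ha₀ ha₁ hb₀ hb₁ hl).antisymm fun z ⟨hz₀, hz₁⟩ => ?_
  rcases le_total ((1 - l) / 2) z with hz | hz
  · exact h ⟨hz, hz₁⟩
  · have reflected : 1 - l - z ∈ diffSet a b l := h ⟨by linarith, by linarith⟩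
    rw [← sub_sub_cancel (1 - l) z]
    exact one_sub_sub_mem_diffSet (by rwa [abs_of_nonneg ha₀]) (by rwa [abs_of_nonneg hb₀])
      reflected

theorem diffSet_eq_Icc_of_diffSet_mul_eq_Icc (hb : |b| < 1) (hm : 0 ≤ m) (hmb : (1 - 2 * b) * m ≤ 1)
    (h : diffSet a b (b * m) = Icc (-(b * m)) 1) : diffSet a b m = Icc (-m) 1 := by
  have shift_nonneg : 0 ≤ m - b * m :=
    sub_nonneg.2 (mul_le_of_le_one_left hm (abs_lt.1 hb).2.le)
  rw [diffSet_eq_union_image a hb, h, image_sub_const_Icc,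
    Icc_union_Icc' (by linarith) (by linarith), min_eq_right (by linarith),
    max_eq_left (by linarith)]
  congr 1
  ring

theorem diffSet_mul_eq_Icc_of_diffSet_eq_Icc (ha₀ : 0 ≤ a) (ha₁ : a < 1) (hb₀ : 0 ≤ b) (hb₁ : b < 1)
    (hm : 0 ≤ m) (hmb : 1 + 3 * (b * m) < 2 * m) (h : diffSet a b m = Icc (-m) 1) :
    diffSet a b (b * m) = Icc (-(b * m)) 1 := by
  have hbm : 0 ≤ b * m := mul_nonneg hb₀ hm
  refine diffSet_eq_Icc_of_right_half_subset ha₀ ha₁ hb₀ hb₁ hbm fun z ⟨hz₀, hz₁⟩ => ?_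
  have hz : z ∈ diffSet a b m := h.ge ⟨by linarith, hz₁⟩
  rw [diffSet_eq_union_image a (by rwa [abs_of_nonneg hb₀])] at hz
  obtain hz | ⟨w, hw, rfl⟩ := hz
  · exact hz
  · have hw₁ : w ≤ 1 := (diffSet_subset_Icc ha₀ ha₁ hb₀ hb₁ hbm hw).2
    linarith

end DiffSet

section Renormalization

variable {a b l : ℝ}

theorem one_add_three_mul_lt_of_thickness_lt_one (hb₀ : 0 < b) (hb : b < 1 / 2)
    (hτ : a * b < (1 - 2 * a) * (1 - 2 * b)) (hl : 1 - 2 * a ≤ b * l) :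
    1 + 3 * (b * l) < 2 * l := by
  refine lt_of_mul_lt_mul_left ?_ hb₀.le
  have lower : (1 - 2 * a) * (2 - 3 * b) ≤ b * l * (2 - 3 * b) := by gcongr; linarith
  linarith

theorem diffSet_mul_right_eq_Icc_iff (ha₀ : 0 ≤ a) (ha : a < 1 / 2) (hb₀ : 0 < b) (hb : b < 1 / 2)
    (hτ : a * b < (1 - 2 * a) * (1 - 2 * b)) (hal : 1 - 2 * a ≤ b * l)
    (hbl : (1 - 2 * b) * l ≤ 1) :
    diffSet a b (b * l) = Icc (-(b * l)) 1 ↔ diffSet a b l = Icc (-l) 1 := by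
  have hl : 0 ≤ l := (pos_of_mul_pos_right (by linarith) hb₀.le).le
  exact ⟨diffSet_eq_Icc_of_diffSet_mul_eq_Icc (abs_lt.2 ⟨by linarith, by linarith⟩) hl hbl,
    diffSet_mul_eq_Icc_of_diffSet_eq_Icc ha₀ (by linarith) hb₀.le (by linarith) hl
      (one_add_three_mul_lt_of_thickness_lt_one hb₀ hb hτ hal)⟩

theorem diffSet_mul_left_eq_Icc_iff (ha₀ : 0 < a) (ha : a < 1 / 2) (hb₀ : 0 < b) (hb : b < 1 / 2)
    (hτ : a * b < (1 - 2 * a) * (1 - 2 * b)) (hal : 1 - 2 * a ≤ a * l)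
    (hbl : (1 - 2 * b) * l ≤ 1) :
    diffSet a b (a * l) = Icc (-(a * l)) 1 ↔ diffSet a b l = Icc (-l) 1 := by
  have hal₀ : 0 < a * l := by linarith
  have hl : 0 < l := pos_of_mul_pos_right hal₀ ha₀.le
  have mul_inv : a * (a * l)⁻¹ = l⁻¹ := by field_simp
  rw [← diffSet_inv_eq_Icc_iff a b hal₀, ← diffSet_inv_eq_Icc_iff a b hl, ← mul_inv]
  refine (diffSet_mul_right_eq_Icc_iff hb₀.le hb ha₀ ha (by linarith) ?_ ?_).symm
  · rwa [mul_inv, ← one_div, le_div_iff₀ hl]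
  · rwa [← div_eq_mul_inv, div_le_one hal₀]

end Renormalization

theorem stmt11 (α β : ℝ) (hα0 : 0 < α) (hα : α < 1 / 2) (hβ0 : 0 < β) (hβ : β < 1 / 2)
    (hτ : (α / (1 - 2 * α)) * (β / (1 - 2 * β)) < 1)
    (p q s₁ s₀ : ℝ) (hp : p = 1 / α) (hq : q = 1 / β)
    (hs₁ : s₁ = 1 - 2 * α) (hs₀ : s₀ = 1 / (1 - 2 * β))
    (l : ℝ) (hl₁ : s₁ ≤ l) (hl₂ : l ≤ s₀) :
    (q * l ≤ s₀ →
      (diffSet α β l = Set.Icc (-l) 1 ↔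
        diffSet α β (q * l) = Set.Icc (-(q * l)) 1)) ∧
    (s₁ ≤ l / p →
      (diffSet α β l = Set.Icc (-l) 1 ↔
        diffSet α β (l / p) = Set.Icc (-(l / p)) 1)) := by
  subst hp hq hs₁ hs₀
  have hα' : 0 < 1 - 2 * α := by linarith
  have hβ' : 0 < 1 - 2 * β := by linarith
  have hτ' : α * β < (1 - 2 * α) * (1 - 2 * β) := by
    rwa [div_mul_div_comm, div_lt_one (mul_pos hα' hβ')] at hτ
  constructor
  · intro hql
    have hl : β * (1 / β * l) = l := by field_simp
    simpa only [hl] using diffSet_mul_right_eq_Icc_iff hα0.le hα hβ0 hβ hτ'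
      (hl₁.trans_eq hl.symm) ((le_div_iff₀' hβ').1 hql)
  · intro hlp
    have hl : l / (1 / α) = α * l := by field_simp
    rw [hl] at hlp ⊢
    exact (diffSet_mul_left_eq_Icc_iff hα0 hα hβ0 hβ hτ' hlp ((le_div_iff₀' hβ').1 hl₂)).symm
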